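/- Let C ≥ 0 be a real number and let f : S¹ → ℝ satisfy: (A) f(x) + f(−x) = πC for all x ∈ S¹; (B) f is Lipschitz continuous, left-differentiable at every point of S¹, and ‖∂₋f‖_TV(S¹) < ∞; and suppose moreover ‖∂₋f‖_TV(S¹) ≤ 4C. Then f is representable by a non-negative finite Borel measure on S¹ with total mass C, i.e., there exists a Borel measure ν : B(S¹) → [0, ∞) with ν(S¹) = C such that f(x) = ∫_{S¹} d_{S¹}(x,y) ν(dy) for all x ∈ S¹. -/

import Mathlib

open MeasureTheory Real Filter Set Complex
open scoped ENNReal NNReal Classical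

noncomputable section

instance : MeasurableSpace Circle := borel Circle
instance : BorelSpace Circle := ⟨rfl⟩

namespace CirclePaper

/-- The spherical (arc-length) distance on the unit circle `S¹ ⊆ ℝ² ≃ ℂ`:
`d_{S¹}(x,y) = arccos ⟨x,y⟩ = arccos (Re (x * conj y))`. -/
def dS1 (x y : Circle) : ℝ := Real.arccos (((x : ℂ) * (starRingEnd ℂ) (y : ℂ)).re)

/-- The antipodal map `T x = -x` (multiplication by `exp(iπ) = -1`). -/
def antipode (x : Circle) : Circle := Circle.exp π * x

/-- Integral of a function against a signed measure (via the Jordan decomposition). -/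
def sInt (l : SignedMeasure Circle) (f : Circle → ℝ) : ℝ :=
  (∫ y, f y ∂l.toJordanDecomposition.posPart) - (∫ y, f y ∂l.toJordanDecomposition.negPart)

/-- `f_λ(x) = ∫_{S¹} d_{S¹}(x,y) λ(dy)`. -/
def fRep (l : SignedMeasure Circle) (x : Circle) : ℝ := sInt l (fun y => dS1 x y)

/-- `f : S¹ → ℝ` has left derivative `L` at `x` w.r.t. the covering `q(t) = exp(it)`,
i.e. `(f(x +_q t) - f(x))/t → L` as `t → 0⁻`. -/
def HasLeftDerivCircleAt (f : Circle → ℝ) (L : ℝ) (x : Circle) : Prop :=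
  Filter.Tendsto (fun t : ℝ => (f (Circle.exp t * x) - f x) / t)
    (nhdsWithin 0 (Set.Iio 0)) (nhds L)

/-- `h : ℝ → ℝ` has left derivative `L` at `t`: `(h(t+s) - h(t))/s → L` as `s → 0⁻`. -/
def HasLeftDerivAtR (h : ℝ → ℝ) (L : ℝ) (t : ℝ) : Prop :=
  Filter.Tendsto (fun s : ℝ => (h (t + s) - h t) / s)
    (nhdsWithin 0 (Set.Iio 0)) (nhds L)

/-- The total variation `‖g‖_{TV(S¹)}` of `g : S¹ → ℝ`: the supremum of
`Σ |g(q(t_i)) - g(q(t_{i+1}))|` over partitions `0 = t_0 ≤ … ≤ t_{n+1} = 2π`. -/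
def circleTV (g : Circle → ℝ) : ℝ≥0∞ := eVariationOn (g ∘ Circle.exp) (Set.Icc 0 (2 * π))

/-- `f` is Lipschitz continuous with respect to the spherical distance. -/
def LipschitzCircle (f : Circle → ℝ) : Prop := ∃ K : ℝ, ∀ x y, |f x - f y| ≤ K * dS1 x y

/-- The normalized Hausdorff 1-measure on `S¹`, i.e. the rotation-invariant Borel
probability measure (the pushforward of normalized Lebesgue measure on `[0, 2π)`). -/
def hausOne : Measure Circle :=
  (ENNReal.ofReal (2 * π))⁻¹ • Measure.map Circle.exp (volume.restrict (Set.Ico 0 (2 * π)))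

instance : IsFiniteMeasure hausOne := by
  constructor
  have h1 : (Measure.map Circle.exp (volume.restrict (Set.Ico 0 (2 * π)))) Set.univ
      = volume (Set.Ico 0 (2 * π)) := by
    rw [Measure.map_apply Circle.exp.continuous.measurable MeasurableSet.univ]
    simp
  simp only [hausOne, Measure.smul_apply, smul_eq_mul, h1, Real.volume_Ico]
  refine ENNReal.mul_lt_top ?_ ?_
  · exact ENNReal.inv_lt_top.mpr (ENNReal.ofReal_pos.mpr (by positivity))
  · exact ENNReal.ofReal_lt_top

/-- The half-open arc `[x, T(x)) = {x +_q t : t ∈ [0, π)}` of length `π` starting at `x`. -/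
def halfArc (x : Circle) : Set Circle := (fun t : ℝ => Circle.exp t * x) '' Set.Ico 0 π

/-- A Borel measure on the circle, regarded as a signed measure
(defined to be `0` if the measure is not finite). -/
def msigned (μ : Measure Circle) : SignedMeasure Circle :=
  if h : IsFiniteMeasure μ then @Measure.toSignedMeasure _ _ μ h else 0


theorem stieltjes_aux (G : ℝ → ℝ) (hG : Monotone G) (b : ℝ) (hb : 0 ≤ b)
    (h0 : ∀ u ≤ 0, G u = G 0) (h1 : ∀ u, b ≤ u → G u = G b) :
    ∃ μ : Measure ℝ, μ Set.univ = ENNReal.ofReal (G b - G 0) ∧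
      (∀ᵐ s ∂μ, s ∈ Set.Icc 0 b) ∧
      ∀ t ∈ Set.Icc 0 b, ∫ s, |t - s| ∂μ =
        (∫ u in (0:ℝ)..t, (G u - G 0)) + ∫ u in t..b, (G b - G u) := by
  set R := hG.stieltjesFunction with hR
  have Rneg : ∀ u < 0, R u = G 0 := fun u hu =>
    le_antisymm (hG.rightLim_le hu) ((h0 u hu.le).symm.le.trans (hG.le_rightLim le_rfl))
  have Rpos : ∀ u, b ≤ u → R u = G b := fun u hu =>
    le_antisymm ((hG.rightLim_le (lt_add_one u)).trans (h1 (u+1) (by linarith)).le)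
      ((h1 u hu).symm.le.trans (hG.le_rightLim le_rfl))
  have hbot : Tendsto R atBot (nhds (G 0)) := by
    apply tendsto_const_nhds.congr'
    filter_upwards [eventually_lt_atBot (0:ℝ)] with u hu using (Rneg u hu).symm
  have htop : Tendsto R atTop (nhds (G b)) := by
    apply tendsto_const_nhds.congr'
    filter_upwards [eventually_ge_atTop b] with u hu using (Rpos u hu).symm
  have hcont : ∀ᵐ u : ℝ, R u = G u ∧ Function.leftLim R u = G u := by
    have hc : {u | ¬ ContinuousAt G u}.Countable := hG.countable_not_continuousAt
    filter_upwards [hc.ae_notMem volume] with u hu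
    have hu : ContinuousAt G u := by simpa using hu
    refine ⟨hu.continuousWithinAt.rightLim_eq, ?_⟩
    change Function.leftLim (Function.rightLim G) u = _
    rw [leftLim_rightLim (hG.tendsto_leftLim u)]
    exact hu.continuousWithinAt.leftLim_eq
  have huniv := R.measure_univ hbot htop
  have hG0b : G 0 ≤ G b := hG hb
  have hfin : IsFiniteMeasure R.measure := ⟨by rw [huniv]; exact ENNReal.ofReal_lt_top⟩
  have hsupp : ∀ᵐ s ∂(R.measure), s ∈ Set.Icc 0 b := by
    have e1 : R.measure (Iio 0) = 0 := by
      rw [R.measure_Iio hbot, ENNReal.ofReal_eq_zero]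
      have : Function.leftLim R 0 = G 0 := by
        apply leftLim_eq_of_tendsto
        apply tendsto_const_nhds.congr'
        filter_upwards [self_mem_nhdsWithin] with u hu using (Rneg u hu).symm
      linarith
    have e2 : R.measure (Ioi b) = 0 := by
      rw [R.measure_Ioi htop, ENNReal.ofReal_eq_zero, Rpos b le_rfl]; simp
    have e1' : ∀ᵐ s ∂(R.measure), s ∉ Iio 0 := measure_eq_zero_iff_ae_notMem.1 e1
    have e2' : ∀ᵐ s ∂(R.measure), s ∉ Ioi b := measure_eq_zero_iff_ae_notMem.1 e2
    filter_upwards [e1', e2'] with s h1 h2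
    simp at h1 h2
    exact ⟨h1, h2⟩
  refine ⟨R.measure, huniv, hsupp, ?_⟩
  rintro t ⟨ht0, htb⟩
  have i1 : Integrable (fun s => max (t - s) 0) R.measure := by
    apply Integrable.of_bound (C := b) (by fun_prop)
    filter_upwards [hsupp] with s hs
    rw [Real.norm_eq_abs, abs_of_nonneg (le_max_right _ _)]
    exact max_le (by linarith [hs.1]) hb
  have i2 : Integrable (fun s => max (s - t) 0) R.measure := by
    apply Integrable.of_bound (C := b) (by fun_prop)
    filter_upwards [hsupp] with s hs
    rw [Real.norm_eq_abs, abs_of_nonneg (le_max_right _ _)]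
    exact max_le (by linarith [hs.2]) hb
  have e : ∀ s : ℝ, |t - s| = max (t - s) 0 + max (s - t) 0 := by
    intro s
    rcases le_total s t with h | h
    · rw [abs_of_nonneg (by linarith), max_eq_left (by linarith), max_eq_right (by linarith), add_zero]
    · rw [abs_of_nonpos (by linarith), max_eq_right (by linarith), max_eq_left (by linarith)]; ring
  simp_rw [e]
  rw [integral_add i1 i2]
  congr 1
  · rw [i1.integral_eq_integral_Ioc_meas_le (M := t) (ae_of_all _ fun s => le_max_right _ _)]
    · rw [← intervalIntegral.integral_of_le ht0]
      have : ∫ r in (0:ℝ)..t, R.measure.real {a | r ≤ max (t - a) 0} =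
          ∫ r in (0:ℝ)..t, (fun u => R u - G 0) (t - r) := by
        apply intervalIntegral.integral_congr_ae
        refine ae_of_all _ fun r hr => ?_
        rw [uIoc_of_le ht0] at hr
        have : {a | r ≤ max (t - a) 0} = Iic (t - r) := by
          ext a
          simp only [mem_ofPred_eq, mem_Iic, le_max_iff]
          constructor
          · rintro (h | h)
            · linarith
            · linarith [hr.1]
          · intro h; left; linarith
        rw [this, Measure.real, R.measure_Iic hbot, ENNReal.toReal_ofReal]
        have : G 0 ≤ R (t - r) := (hG (by linarith [hr.2])).trans (hG.le_rightLim le_rfl)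
        linarith
      rw [this, intervalIntegral.integral_comp_sub_left (fun u => R u - G 0) t]
      simp only [sub_self, sub_zero]
      apply intervalIntegral.integral_congr_ae
      filter_upwards [hcont] with u hu _
      rw [hu.1]
    · filter_upwards [hsupp] with s hs
      exact max_le (by linarith [hs.1]) ht0
  · rw [i2.integral_eq_integral_Ioc_meas_le (M := b - t) (ae_of_all _ fun s => le_max_right _ _)]
    · rw [← intervalIntegral.integral_of_le (by linarith)]
      have : ∫ r in (0:ℝ)..(b - t), R.measure.real {a | r ≤ max (a - t) 0} =
          ∫ r in (0:ℝ)..(b - t), (fun u => G b - Function.leftLim R u) (t + r) := by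
        apply intervalIntegral.integral_congr_ae
        refine ae_of_all _ fun r hr => ?_
        rw [uIoc_of_le (by linarith)] at hr
        have : {a | r ≤ max (a - t) 0} = Ici (t + r) := by
          ext a
          simp only [mem_ofPred_eq, mem_Ici, le_max_iff]
          constructor
          · rintro (h | h)
            · linarith
            · linarith [hr.1]
          · intro h; left; linarith
        rw [this, Measure.real, R.measure_Ici htop, ENNReal.toReal_ofReal]
        have h3 : Function.leftLim R (t + r) ≤ R b := R.mono.leftLim_le (by linarith [hr.2])
        rw [Rpos b le_rfl] at h3
        linarith
      rw [this, intervalIntegral.integral_comp_add_left (fun u => G b - Function.leftLim R u) t]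
      simp only [add_zero, add_sub_cancel]
      apply intervalIntegral.integral_congr_ae
      filter_upwards [hcont] with u hu _
      rw [hu.2]
    · filter_upwards [hsupp] with s hs
      exact max_le (by linarith [hs.2]) (by linarith)

/-- FTC for left derivatives. -/
theorem ftc_left (F g : ℝ → ℝ) (a b : ℝ) (hab : a ≤ b) (hF : Continuous F)
    (hg : ∀ t, Tendsto (fun s : ℝ => (F (t + s) - F t) / s) (nhdsWithin 0 (Set.Iio 0)) (nhds (g t)))
    (hint : IntervalIntegrable g volume a b) : ∫ u in a..b, g u = F b - F a := by
  have key := intervalIntegral.integral_eq_sub_of_hasDeriv_right_of_le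
    (f := fun t => - F (-t)) (f' := fun t => g (-t)) (a := -b) (b := -a) (by linarith)
    (by fun_prop) ?_ ?_
  · rw [intervalIntegral.integral_comp_neg (f := g)] at key
    simp at key
    linarith
  · intro x _
    rw [hasDerivWithinAt_iff_tendsto_slope]
    have h := (hg (-x))
    have hm : Tendsto (fun y : ℝ => x - y) (nhdsWithin x (Ioi x \ {x})) (nhdsWithin 0 (Iio 0)) := by
      apply tendsto_nhdsWithin_of_tendsto_nhds_of_eventually_within
      · have : Tendsto (fun y : ℝ => x - y) (nhds x) (nhds (x - x)) :=
          (continuous_const.sub continuous_id).tendsto x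
        rw [sub_self] at this
        exact this.mono_left nhdsWithin_le_nhds
      · filter_upwards [self_mem_nhdsWithin] with y hy
        have := hy.1
        simp at this ⊢
        exact this
    refine (h.comp hm).congr' ?_
    filter_upwards [self_mem_nhdsWithin] with y hy
    have h1 : x < y := hy.1
    simp only [Function.comp, slope, vsub_eq_sub, smul_eq_mul]
    rw [show -x + (x - y) = -y by ring]
    have : x - y ≠ 0 := by linarith
    have : y - x ≠ 0 := by linarith
    rw [div_eq_iff ‹x - y ≠ 0›]
    field_simp
    ring
  · have := hint.symm.comp_sub_left 0
    simpa using this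

/-- positive/negative variation split -/
theorem var_aux (g : ℝ → ℝ) (b : ℝ) (hfin : eVariationOn g (Icc 0 b) ≠ ⊤) :
    ∃ v : ℝ → ℝ, v 0 = 0 ∧ v b = (eVariationOn g (Icc 0 b)).toReal ∧
      ∀ s t, 0 ≤ s → s ≤ t → t ≤ b → |g t - g s| ≤ v t - v s := by
  refine ⟨fun t => (eVariationOn g (Icc 0 t)).toReal, ?_, rfl, ?_⟩
  · simp [eVariationOn.subsingleton]
  · intro s t hs hst htb
    have h := eVariationOn.Icc_add_Icc g (s := univ) hs hst (mem_univ _)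
    simp only [univ_inter] at h
    have f1 : eVariationOn g (Icc 0 t) ≠ ⊤ :=
      ne_top_of_le_ne_top hfin (eVariationOn.mono _ (Icc_subset_Icc_right htb))
    rw [← h, ENNReal.add_ne_top] at f1
    simp only
    rw [← h, ENNReal.toReal_add f1.1 f1.2, add_sub_cancel_left]
    have := eVariationOn.edist_le g (s := Icc s t) (x := t) (y := s) ⟨hst, le_rfl⟩ ⟨le_rfl, hst⟩
    rw [edist_dist, Real.dist_eq] at this
    exact (ENNReal.ofReal_le_iff_le_toReal f1.2).1 this

theorem var_half (g : ℝ → ℝ) (b : ℝ) (hb : 0 ≤ b) (h : ∀ t, g (t + b) = - g t) :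
    eVariationOn g (Icc 0 (2 * b)) = 2 * eVariationOn g (Icc 0 b) := by
  have h1 := eVariationOn.Icc_add_Icc g (s := univ) hb (show b ≤ 2 * b by linarith) (mem_univ _)
  simp only [univ_inter] at h1
  rw [← h1, two_mul (eVariationOn g (Icc 0 b))]
  congr 1
  have h2 := eVariationOn.comp_eq_of_monotoneOn g (t := Icc 0 b) (fun t => t + b)
    (fun x _ y _ hxy => by simpa using hxy)
  rw [image_add_const_Icc, zero_add, ← two_mul] at h2
  rw [← h2]
  unfold eVariationOn
  simp [Function.comp, h]

theorem dS1_exp (t s : ℝ) : dS1 (Circle.exp t) (Circle.exp s) = Real.arccos (Real.cos (t - s)) := by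
  unfold dS1
  congr 1
  rw [Real.cos_sub]
  simp [Circle.coe_exp, Complex.exp_ofReal_mul_I_re, Complex.exp_ofReal_mul_I_im]

theorem dS1_exp_abs {t s : ℝ} (ht : t ∈ Icc 0 π) (hs : s ∈ Icc 0 π) :
    dS1 (Circle.exp t) (Circle.exp s) = |t - s| := by
  rw [dS1_exp, ← Real.cos_abs, Real.arccos_cos (abs_nonneg _)]
  exact abs_le.2 ⟨by linarith [ht.1, hs.2], by linarith [ht.2, hs.1]⟩

theorem dS1_exp_abs' {t s : ℝ} (ht : t ∈ Icc 0 π) (hs : s ∈ Icc 0 π) :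
    dS1 (Circle.exp t) (Circle.exp (s + π)) = π - |t - s| := by
  rw [dS1_exp, ← sub_sub, Real.cos_sub_pi, Real.arccos_neg, ← dS1_exp, dS1_exp_abs ht hs]

theorem dS1_continuous (x : Circle) : Continuous (fun y => dS1 x y) := by
  unfold dS1
  apply Real.continuous_arccos.comp
  apply Complex.continuous_re.comp
  exact continuous_const.mul (Complex.continuous_conj.comp continuous_subtype_val)

theorem dS1_integrable (x : Circle) (μ : Measure Circle) [IsFiniteMeasure μ] :
    Integrable (fun y => dS1 x y) μ := by
  apply Integrable.of_bound (C := π) (dS1_continuous x).aestronglyMeasurable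
  refine ae_of_all _ fun y => ?_
  rw [Real.norm_eq_abs, dS1, abs_of_nonneg (Real.arccos_nonneg _)]
  exact Real.arccos_le_pi _

theorem dS1_antipode (x y : Circle) : dS1 (antipode x) y = π - dS1 x y := by
  unfold dS1 antipode
  rw [← Real.arccos_neg]
  congr 1
  simp [Circle.coe_exp]

theorem exp_add_pi (t : ℝ) : Circle.exp (t + π) = antipode (Circle.exp t) := by
  rw [antipode, Circle.exp_add, mul_comm]

/-- If `C ≥ 0` and `f` satisfies (A), (B) and `‖∂₋f‖_{TV(S¹)} ≤ 4C`,
then `f` is representable by a non-negative Borel measure of total mass `C`. -/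
theorem stmt14 (C : ℝ) (hC : 0 ≤ C) (f : Circle → ℝ)
    (hA : ∀ x : Circle, f x + f (antipode x) = π * C)
    (hLip : LipschitzCircle f)
    (f' : Circle → ℝ) (hf' : ∀ x : Circle, HasLeftDerivCircleAt f (f' x) x)
    (hTVfin : circleTV f' ≠ ⊤)
    (hTV4C : circleTV f' ≤ ENNReal.ofReal (4 * C)) :
    ∃ ν : Measure Circle, ν Set.univ = ENNReal.ofReal C ∧
      ∀ x : Circle, f x = ∫ y, dS1 x y ∂ν := by
  set F : ℝ → ℝ := fun t => f (Circle.exp t) with hFdef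
  set g : ℝ → ℝ := f' ∘ Circle.exp with hgdef
  have hπ := Real.pi_pos
  have hFc : Continuous F := by
    obtain ⟨K, hK⟩ := hLip
    rw [continuous_iff_continuousAt]
    intro s
    rw [ContinuousAt, tendsto_iff_dist_tendsto_zero]
    have h0 : Tendsto (fun t => K * Real.arccos (Real.cos (t - s))) (nhds s) (nhds 0) := by
      have : Continuous (fun t => K * Real.arccos (Real.cos (t - s))) :=
        continuous_const.mul (Real.continuous_arccos.comp
          (Real.continuous_cos.comp (continuous_id.sub continuous_const)))
      simpa using this.tendsto s
    refine squeeze_zero (fun _ => dist_nonneg) (fun t => ?_) h0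
    rw [Real.dist_eq, ← dS1_exp]
    exact hK _ _
  have hg : ∀ t, Tendsto (fun s : ℝ => (F (t + s) - F t) / s)
      (nhdsWithin 0 (Set.Iio 0)) (nhds (g t)) := by
    intro t
    have := hf' (Circle.exp t)
    unfold HasLeftDerivCircleAt at this
    refine this.congr fun s => ?_
    simp only [hFdef, Circle.exp_add, mul_comm]
  have hFanti : ∀ t, F t + F (t + π) = π * C := by
    intro t
    have := hA (Circle.exp t)
    rwa [← exp_add_pi] at this
  have hganti : ∀ t, g (t + π) = - g t := by
    intro t
    refine tendsto_nhds_unique (hg (t + π)) ?_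
    refine (hg t).neg.congr fun s => ?_
    have e1 := hFanti t
    have e2 := hFanti (t + s)
    rw [← neg_div]
    congr 1
    rw [show t + π + s = t + s + π by ring]
    linarith
  have hvar : circleTV f' = 2 * eVariationOn g (Icc 0 π) := var_half g π hπ.le hganti
  have hVfin : eVariationOn g (Icc 0 π) ≠ ⊤ := by
    intro h
    rw [h] at hvar
    exact hTVfin (by rw [hvar]; simp)
  obtain ⟨v, hv0, hvπ, hv⟩ := var_aux g π hVfin
  have hV : v π ≤ 2 * C := by
    rw [hvar] at hTV4C
    have := ENNReal.toReal_mono ENNReal.ofReal_ne_top hTV4C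
    rw [ENNReal.toReal_ofReal (by linarith), ENNReal.toReal_mul, ← hvπ] at this
    simp at this
    linarith
  set c : ℝ → ℝ := fun u => max 0 (min u π) with hc
  have hcm : Monotone c := fun x y h => max_le_max le_rfl (min_le_min h le_rfl)
  have hc0 : ∀ u, 0 ≤ c u := fun u => le_max_left _ _
  have hc1 : ∀ u, c u ≤ π := fun u => max_le hπ.le (min_le_right _ _)
  have hcneg : ∀ u ≤ 0, c u = 0 := fun u hu => max_eq_left ((min_le_left _ _).trans hu)
  have hcpos : ∀ u, π ≤ u → c u = π := fun u hu => by
    simp only [hc]; rw [min_eq_right hu, max_eq_right hπ.le]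
  have hcid : ∀ u ∈ Icc 0 π, c u = u := fun u hu => by
    simp only [hc]; rw [min_eq_left hu.2, max_eq_right hu.1]
  set Gp : ℝ → ℝ := fun u => (v (c u) + g (c u)) / 4 with hGp
  set Gn : ℝ → ℝ := fun u => (v (c u) - g (c u)) / 4 with hGn
  have mp : Monotone Gp := by
    intro x y h
    have := abs_le.1 (hv _ _ (hc0 x) (hcm h) (hc1 y))
    simp only [hGp]
    linarith [this.1]
  have mn : Monotone Gn := by
    intro x y h
    have := abs_le.1 (hv _ _ (hc0 x) (hcm h) (hc1 y))
    simp only [hGn]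
    linarith [this.2]
  have gπ : g π = - g 0 := by simpa using hganti 0
  have Gp0 : Gp 0 = g 0 / 4 := by simp only [hGp]; rw [hcneg 0 le_rfl, hv0, zero_add]
  have Gn0 : Gn 0 = - g 0 / 4 := by simp only [hGn]; rw [hcneg 0 le_rfl, hv0, zero_sub]
  have Gpπ : Gp π = (v π - g 0) / 4 := by
    simp only [hGp]; rw [hcpos π le_rfl, gπ, ← sub_eq_add_neg]
  have Gnπ : Gn π = (v π + g 0) / 4 := by
    simp only [hGn]; rw [hcpos π le_rfl, gπ, sub_neg_eq_add]
  have ip : ∀ a b, IntervalIntegrable Gp volume a b := fun a b => mp.intervalIntegrable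
  have int_n : ∀ a b, IntervalIntegrable Gn volume a b := fun a b => mn.intervalIntegrable
  have hint : ∀ a b, 0 ≤ a → a ≤ b → b ≤ π →
      F b - F a = 2 * ((∫ u in a..b, Gp u) - ∫ u in a..b, Gn u) := by
    intro a b ha hab hb
    have heq : ∀ u ∈ uIcc a b, 2 * (Gp u - Gn u) = g u := by
      intro u hu
      rw [uIcc_of_le hab] at hu
      simp only [hGp, hGn]
      rw [hcid u ⟨ha.trans hu.1, hu.2.trans hb⟩]
      ring
    have hI : IntervalIntegrable (fun u => 2 * (Gp u - Gn u)) volume a b :=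
      ((ip a b).sub (int_n a b)).const_mul 2
    have hI' : IntervalIntegrable g volume a b :=
      hI.congr (fun u hu => heq u (uIoc_subset_uIcc hu))
    rw [← ftc_left F g a b hab hFc hg hI', ← intervalIntegral.integral_congr heq,
      intervalIntegral.integral_const_mul, intervalIntegral.integral_sub (ip a b) (int_n a b)]
  obtain ⟨μp, up, sp, Ip⟩ := stieltjes_aux Gp mp π hπ.le
    (fun u hu => by simp only [hGp]; rw [hcneg u hu, hcneg 0 le_rfl])
    (fun u hu => by simp only [hGp]; rw [hcpos u hu, hcpos π le_rfl])
  obtain ⟨μn, un, sn, In⟩ := stieltjes_aux Gn mn π hπ.le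
    (fun u hu => by simp only [hGn]; rw [hcneg u hu, hcneg 0 le_rfl])
    (fun u hu => by simp only [hGn]; rw [hcpos u hu, hcpos π le_rfl])
  have fp : IsFiniteMeasure μp := ⟨by rw [up]; exact ENNReal.ofReal_lt_top⟩
  have fn : IsFiniteMeasure μn := ⟨by rw [un]; exact ENNReal.ofReal_lt_top⟩
  set k : ℝ := (C - v π / 2) / 2 with hk
  have hk0 : 0 ≤ k := by simp only [hk]; linarith
  have m1 : Measurable (fun s : ℝ => Circle.exp s) := Circle.exp.continuous.measurable
  have m2 : Measurable (fun s : ℝ => Circle.exp (s + π)) :=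
    (Circle.exp.continuous.comp (continuous_id.add continuous_const)).measurable
  set ν1 := Measure.map (fun s : ℝ => Circle.exp s) μp with hν1
  set ν2 := Measure.map (fun s : ℝ => Circle.exp (s + π)) μn with hν2
  set ν3 : Measure Circle := ENNReal.ofReal k •
    (Measure.dirac (Circle.exp 0) + Measure.dirac (Circle.exp (0 + π))) with hν3
  have f1 : IsFiniteMeasure ν1 := Measure.isFiniteMeasure_map _ _
  have f2 : IsFiniteMeasure ν2 := Measure.isFiniteMeasure_map _ _
  have f3 : IsFiniteMeasure ν3 := Measure.smul_finite _ ENNReal.ofReal_ne_top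
  have hmass : (ν1 + ν2 + ν3) Set.univ = ENNReal.ofReal C := by
    have hP : 0 ≤ Gp π - Gp 0 := by linarith [mp hπ.le]
    have hN : 0 ≤ Gn π - Gn 0 := by linarith [mn hπ.le]
    simp only [Measure.add_apply, hν1, hν2, hν3, Measure.smul_apply, smul_eq_mul]
    rw [Measure.map_apply m1 MeasurableSet.univ, Measure.map_apply m2 MeasurableSet.univ]
    simp only [preimage_univ, up, un, measure_univ]
    rw [show (1 + 1 : ℝ≥0∞) = ENNReal.ofReal 2 by norm_num, ← ENNReal.ofReal_mul hk0,
      ← ENNReal.ofReal_add hP hN, ← ENNReal.ofReal_add (by linarith) (by linarith)]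
    congr 1
    rw [Gp0, Gn0, Gpπ, Gnπ, hk]
    ring
  have hupper : ∀ t ∈ Icc 0 π, f (Circle.exp t) = ∫ y, dS1 (Circle.exp t) y ∂(ν1 + ν2 + ν3) := by
    intro t ht
    rw [integral_add_measure (dS1_integrable _ _) (dS1_integrable _ _),
      integral_add_measure (dS1_integrable _ _) (dS1_integrable _ _)]
    have J1 : ∫ y, dS1 (Circle.exp t) y ∂ν1 = ∫ s, |t - s| ∂μp := by
      rw [hν1, integral_map m1.aemeasurable (dS1_continuous _).aestronglyMeasurable]
      apply integral_congr_ae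
      filter_upwards [sp] with s hs using dS1_exp_abs ht hs
    have J2 : ∫ y, dS1 (Circle.exp t) y ∂ν2 = π * (Gn π - Gn 0) - ∫ s, |t - s| ∂μn := by
      rw [hν2, integral_map m2.aemeasurable (dS1_continuous _).aestronglyMeasurable]
      have : ∫ s, dS1 (Circle.exp t) (Circle.exp (s + π)) ∂μn = ∫ s, (π - |t - s|) ∂μn := by
        apply integral_congr_ae
        filter_upwards [sn] with s hs using dS1_exp_abs' ht hs
      rw [this, integral_sub (integrable_const _)]
      · rw [integral_const, Measure.real, un, ENNReal.toReal_ofReal (by linarith [mn hπ.le]),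
          smul_eq_mul, mul_comm]
      · apply Integrable.of_bound (C := π) (by fun_prop)
        filter_upwards [sn] with s hs
        rw [Real.norm_eq_abs, abs_abs]
        exact abs_le.2 ⟨by linarith [ht.1, hs.2], by linarith [ht.2, hs.1]⟩
    have J3 : ∫ y, dS1 (Circle.exp t) y ∂ν3 = k * π := by
      rw [hν3, integral_smul_measure,
        integral_add_measure (dS1_integrable _ _) (dS1_integrable _ _),
        integral_dirac, integral_dirac, dS1_exp_abs ht ⟨le_rfl, hπ.le⟩,
        dS1_exp_abs' ht ⟨le_rfl, hπ.le⟩, ENNReal.toReal_ofReal hk0, smul_eq_mul]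
      ring
    rw [J1, J2, J3, Ip t ht, In t ht]
    have e1 := hint 0 t le_rfl ht.1 ht.2
    have e2 := hint t π ht.1 ht.2 le_rfl
    have e3 := hFanti 0
    rw [zero_add] at e3
    have cc : ∀ a b d : ℝ, IntervalIntegrable (fun _ : ℝ => d) volume a b :=
      fun a b d => intervalIntegrable_const
    rw [intervalIntegral.integral_sub (ip _ _) (cc _ _ _),
      intervalIntegral.integral_sub (cc _ _ _) (ip _ _),
      intervalIntegral.integral_sub (int_n _ _) (cc _ _ _),
      intervalIntegral.integral_sub (cc _ _ _) (int_n _ _)]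
    simp only [intervalIntegral.integral_const, smul_eq_mul]
    rw [Gp0, Gn0, Gpπ, Gnπ, hk]
    change F t = _
    linear_combination (1/2) * e1 - (1/2) * e2 + (1/2) * e3
  refine ⟨ν1 + ν2 + ν3, hmass, fun x => ?_⟩
  have hx1 := Complex.neg_pi_lt_arg (x : ℂ)
  have hx2 := Complex.arg_le_pi (x : ℂ)
  rcases le_or_gt 0 (Complex.arg (x : ℂ)) with h | h
  · have := hupper _ ⟨h, hx2⟩
    rwa [Circle.exp_arg] at this
  · have := hupper (Complex.arg (x : ℂ) + π) ⟨by linarith, by linarith⟩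
    rw [exp_add_pi, Circle.exp_arg] at this
    simp_rw [dS1_antipode] at this
    rw [integral_sub (integrable_const _) (dS1_integrable _ _), integral_const, Measure.real,
      hmass, ENNReal.toReal_ofReal hC, smul_eq_mul] at this
    linarith [hA x]

end CirclePaper
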